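/- Let A be an iH₃△-algebra. The intersection of all maximal weak deductive systems of A equals {1}; equivalently, for every a ∈ A with a ≠ 1 there exists a maximal weak deductive system M of A with a ∉ M. -/

import Mathlib

class iH3 (A : Type*) extends One A where
  imp : A → A → A
  inf : A → A → A
  h1 : ∀ x y : A, imp x (imp y x) = 1
  h2 : ∀ x y z : A, imp (imp x (imp y z)) (imp (imp x y) (imp x z)) = 1
  h3 : ∀ x y : A, imp x y = 1 → imp y x = 1 → x = y
  it3 : ∀ x y z : A, imp (imp (imp x y) z) (imp (imp (imp z x) z) z) = 1
  ih1 : ∀ x y z : A, inf x (inf y z) = inf (inf x y) z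
  ih2 : ∀ x : A, inf x x = x
  ih3 : ∀ x y : A, inf x (imp x y) = inf x y
  ih4 : ∀ x y z : A, imp (imp x (inf y z)) (inf (imp x z) (imp x y)) = 1

class iH3D (A : Type*) extends iH3 A where
  box : A → A
  m1 : ∀ x : A, imp (box x) x = 1
  m2 : ∀ x y : A, imp (imp (imp y (box y)) (imp x (box (box x)))) (box (imp x y)) = imp (box x) (box (box y))
  m3 : ∀ x y : A, imp (imp (box x) (box y)) (box x) = box x

/-- A weak deductive system (w.r.t. the weak implication `x↣y := △x→y`). -/
def isWDS {A : Type*} [iH3D A] (D : Set A) : Prop :=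
  (1 : A) ∈ D ∧ ∀ x y : A, x ∈ D → iH3.imp (iH3D.box x) y ∈ D → y ∈ D

/-- A maximal weak deductive system: a proper weak deductive system whose only
weak deductive system extensions are itself and the whole algebra. -/
def isMaxWDS {A : Type*} [iH3D A] (M : Set A) : Prop :=
  isWDS M ∧ M ≠ Set.univ ∧
    ∀ D : Set A, isWDS D → M ⊆ D → D = M ∨ D = Set.univ

/-!
The weak implication `x ↣ y := △x → y` satisfies the axioms of classical implicational logic:
by `△(△x → y) = △x → △y`, axiom (M3) becomes Peirce's law for `↣`. For such an implication and
`a ≠ 1`, Zorn's lemma extends `{1}` to a deductive system `M` maximal among those omitting `a`. If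
`b ∉ M`, the deductive system `{y | b ↣ y ∈ M}` properly extends `M`, so it contains `a`. Hence
`a ↣ c ∉ M` would give `(a ↣ c) ↣ a ∈ M`, and then `a ∈ M` by Peirce's law. So `a ↣ c ∈ M` for
every `c`: a deductive system that extends `M` and contains `a` is everything, and `M` is maximal
among all proper deductive systems.
-/

section PositiveImplication

variable {A : Type*} [One A]

/-- Positive implicational logic for a binary operation: `1` is the only theorem, so the axiom
schemes K and S and the rule of modus ponens become statements about values equal to `1`. The
relation `imp x y = 1` is then a preorder, with no antisymmetry imposed. -/
structure IsPositiveImplication (imp : A → A → A) : Prop where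
  eq_one_of_one_imp {x : A} : imp 1 x = 1 → x = 1
  imp_imp_left (x y : A) : imp x (imp y x) = 1
  imp_distrib (x y z : A) : imp (imp x (imp y z)) (imp (imp x y) (imp x z)) = 1

/-- Classical implicational logic: positive implicational logic with Peirce's law. -/
structure IsClassicalImplication (imp : A → A → A) : Prop extends IsPositiveImplication imp where
  peirce (x y : A) : imp (imp (imp x y) x) x = 1

namespace IsPositiveImplication

variable {imp : A → A → A}

theorem modus_ponens (h : IsPositiveImplication imp) {x y : A} (hx : x = 1)
    (hxy : imp x y = 1) : y = 1 :=
  h.eq_one_of_one_imp (hx ▸ hxy)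

theorem imp_one (h : IsPositiveImplication imp) (x : A) : imp x 1 = 1 :=
  h.eq_one_of_one_imp (h.imp_imp_left 1 x)

theorem imp_modus_ponens (h : IsPositiveImplication imp) {x y z : A} (hy : imp x y = 1)
    (hyz : imp x (imp y z) = 1) : imp x z = 1 :=
  h.modus_ponens hy (h.modus_ponens hyz (h.imp_distrib x y z))

theorem imp_self (h : IsPositiveImplication imp) (x : A) : imp x x = 1 :=
  h.imp_modus_ponens (h.imp_imp_left x x) (h.imp_imp_left x (imp x x))

theorem imp_trans (h : IsPositiveImplication imp) {x y z : A} (hxy : imp x y = 1)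
    (hyz : imp y z = 1) : imp x z = 1 :=
  h.imp_modus_ponens hxy (hyz ▸ h.imp_one x)

end IsPositiveImplication

end PositiveImplication

section DeductiveSystem

variable {A : Type*} [One A]

/-- A deductive system of `imp`: a set containing `1` and closed under modus ponens. -/
structure IsDeductiveSystem (imp : A → A → A) (D : Set A) : Prop where
  one_mem : 1 ∈ D
  modus_ponens {x y : A} : x ∈ D → imp x y ∈ D → y ∈ D

/-- A maximal deductive system of `imp`: one that is maximal among the proper ones. -/
def IsMaximalDeductiveSystem (imp : A → A → A) (M : Set A) : Prop :=
  Maximal (fun D => IsDeductiveSystem imp D ∧ D ≠ Set.univ) M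

variable {imp : A → A → A}

namespace IsDeductiveSystem

theorem mem_of_imp_eq_one {D : Set A} (hD : IsDeductiveSystem imp D) {x y : A} (hx : x ∈ D)
    (hxy : imp x y = 1) : y ∈ D :=
  hD.modus_ponens hx (hxy ▸ hD.one_mem)

theorem sUnion_of_directedOn {c : Set (Set A)} (hc : ∀ D ∈ c, IsDeductiveSystem imp D)
    (hne : c.Nonempty) (hdir : DirectedOn (· ⊆ ·) c) : IsDeductiveSystem imp (⋃₀ c) where
  one_mem :=
    let ⟨D, hD⟩ := hne
    ⟨D, hD, (hc D hD).one_mem⟩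
  modus_ponens := by
    rintro x y ⟨D, hD, hx⟩ ⟨E, hE, hxy⟩
    obtain ⟨F, hF, hDF, hEF⟩ := hdir D hD E hE
    exact ⟨F, hF, (hc F hF).modus_ponens (hDF hx) (hEF hxy)⟩

theorem exists_maximal_notMem {D : Set A} (hD : IsDeductiveSystem imp D) {a : A} (ha : a ∉ D) :
    ∃ M, D ⊆ M ∧ Maximal (fun E => IsDeductiveSystem imp E ∧ a ∉ E) M := by
  refine zorn_subset_nonempty {E | IsDeductiveSystem imp E ∧ a ∉ E} ?_ D ⟨hD, ha⟩
  intro c hc hchain hne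
  refine ⟨⋃₀ c, ⟨?_, ?_⟩, fun _ => Set.subset_sUnion_of_mem⟩
  · exact sUnion_of_directedOn (fun E hE => (hc hE).1) hne hchain.directedOn
  · rintro ⟨E, hE, haE⟩
    exact (hc hE).2 haE

end IsDeductiveSystem

namespace IsPositiveImplication

theorem isDeductiveSystem_singleton_one (h : IsPositiveImplication imp) :
    IsDeductiveSystem imp {1} where
  one_mem := rfl
  modus_ponens := h.modus_ponens

theorem isDeductiveSystem_setOf_imp_mem (h : IsPositiveImplication imp) {D : Set A}
    (hD : IsDeductiveSystem imp D) (b : A) : IsDeductiveSystem imp {y | imp b y ∈ D} where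
  one_mem := by simpa only [Set.mem_ofPred_eq, h.imp_one] using hD.one_mem
  modus_ponens {x y} hx hxy := hD.modus_ponens hx (hD.mem_of_imp_eq_one hxy (h.imp_distrib b x y))

theorem imp_mem_of_maximal_notMem (h : IsPositiveImplication imp) {M : Set A} {a b : A}
    (hM : Maximal (fun E => IsDeductiveSystem imp E ∧ a ∉ E) M) (hb : b ∉ M) : imp b a ∈ M := by
  by_contra hba
  have hext := h.isDeductiveSystem_setOf_imp_mem hM.prop.1 b
  have hsub : M ⊆ {y | imp b y ∈ M} := fun y hy =>
    hM.prop.1.mem_of_imp_eq_one hy (h.imp_imp_left y b)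
  have hb_mem : b ∈ {y | imp b y ∈ M} := by
    simpa only [Set.mem_ofPred_eq, h.imp_self] using hM.prop.1.one_mem
  exact hb (hM.le_of_ge ⟨hext, hba⟩ hsub hb_mem)

end IsPositiveImplication

namespace IsClassicalImplication

theorem imp_mem_of_maximal_notMem_left (h : IsClassicalImplication imp) {M : Set A} {a : A}
    (hM : Maximal (fun E => IsDeductiveSystem imp E ∧ a ∉ E) M) (c : A) : imp a c ∈ M := by
  by_contra hac
  have hmem : imp (imp a c) a ∈ M := h.imp_mem_of_maximal_notMem hM hac
  exact hM.prop.2 (hM.prop.1.mem_of_imp_eq_one hmem (h.peirce a c))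

theorem isMaximalDeductiveSystem_of_maximal_notMem (h : IsClassicalImplication imp) {M : Set A}
    {a : A} (hM : Maximal (fun E => IsDeductiveSystem imp E ∧ a ∉ E) M) :
    IsMaximalDeductiveSystem imp M := by
  refine ⟨⟨hM.prop.1, fun huniv => hM.prop.2 (huniv ▸ Set.mem_univ a)⟩, ?_⟩
  rintro D ⟨hD, hproper⟩ hMD
  have haD : a ∉ D := fun haD => hproper <| Set.eq_univ_of_forall fun c =>
    hD.modus_ponens haD (hMD (h.imp_mem_of_maximal_notMem_left hM c))
  exact hM.le_of_ge ⟨hD, haD⟩ hMD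

theorem exists_isMaximalDeductiveSystem_notMem (h : IsClassicalImplication imp) {D : Set A}
    (hD : IsDeductiveSystem imp D) {a : A} (ha : a ∉ D) :
    ∃ M, D ⊆ M ∧ IsMaximalDeductiveSystem imp M ∧ a ∉ M := by
  obtain ⟨M, hDM, hM⟩ := hD.exists_maximal_notMem ha
  exact ⟨M, hDM, h.isMaximalDeductiveSystem_of_maximal_notMem hM, hM.prop.2⟩

theorem sInter_isMaximalDeductiveSystem (h : IsClassicalImplication imp) :
    ⋂₀ {M | IsMaximalDeductiveSystem imp M} = {1} := by
  refine Set.Subset.antisymm (fun a ha => ?_) ?_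
  · by_contra ha_ne
    obtain ⟨M, -, hM, haM⟩ :=
      h.exists_isMaximalDeductiveSystem_notMem h.isDeductiveSystem_singleton_one ha_ne
    exact haM (ha M hM)
  · rintro _ rfl M (hM : IsMaximalDeductiveSystem imp M)
    exact hM.prop.1.one_mem

end IsClassicalImplication

end DeductiveSystem

/-- A Hilbert algebra, with its implication written `⇨`. No order instance is attached: `x ≤ y` is
expressed as `x ⇨ y = 1`. -/
class HilbertAlgebra (A : Type*) extends One A, HImp A where
  himp_himp_left (x y : A) : x ⇨ (y ⇨ x) = 1
  himp_distrib (x y z : A) : (x ⇨ (y ⇨ z)) ⇨ ((x ⇨ y) ⇨ (x ⇨ z)) = 1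
  himp_antisymm {x y : A} : x ⇨ y = 1 → y ⇨ x = 1 → x = y

namespace HilbertAlgebra

variable {A : Type*} [HilbertAlgebra A]

theorem eq_one_of_one_himp {x : A} (hx : 1 ⇨ x = 1) : x = 1 := by
  have himp_one : x ⇨ (1 : A) = 1 := by
    refine himp_antisymm ?_ (himp_himp_left 1 x)
    simpa only [himp_himp_left] using himp_himp_left (x ⇨ (1 : A)) 1
  exact himp_antisymm himp_one hx

theorem isPositiveImplication_himp : IsPositiveImplication ((· ⇨ ·) : A → A → A) where
  eq_one_of_one_imp := eq_one_of_one_himp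
  imp_imp_left := himp_himp_left
  imp_distrib := himp_distrib

theorem himp_one (x : A) : x ⇨ (1 : A) = 1 := isPositiveImplication_himp.imp_one x

protected theorem himp_self (x : A) : x ⇨ x = 1 := isPositiveImplication_himp.imp_self x

theorem himp_trans {x y z : A} (hxy : x ⇨ y = 1) (hyz : y ⇨ z = 1) : x ⇨ z = 1 :=
  isPositiveImplication_himp.imp_trans hxy hyz

theorem himp_modus_ponens {x y z : A} (hy : x ⇨ y = 1) (hyz : x ⇨ (y ⇨ z) = 1) : x ⇨ z = 1 :=
  isPositiveImplication_himp.imp_modus_ponens hy hyz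

theorem one_himp (x : A) : 1 ⇨ x = x :=
  himp_antisymm (himp_modus_ponens (himp_one _) (HilbertAlgebra.himp_self _)) (himp_himp_left x 1)

end HilbertAlgebra

/-- A Hilbert algebra with an operator `△` satisfying (M1), (M2) and (M3). -/
class DeltaHilbertAlgebra (A : Type*) extends HilbertAlgebra A where
  delta : A → A
  delta_himp_self (x : A) : delta x ⇨ x = 1
  delta_himp_eq (x y : A) :
    ((y ⇨ delta y) ⇨ (x ⇨ delta (delta x))) ⇨ delta (x ⇨ y) = delta x ⇨ delta (delta y)
  delta_peirce (x y : A) : (delta x ⇨ delta y) ⇨ delta x = delta x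

namespace DeltaHilbertAlgebra

open HilbertAlgebra

local prefix:max "△" => delta

variable {A : Type*} [DeltaHilbertAlgebra A]

theorem delta_one : △(1 : A) = 1 := by
  have hfix : △(1 : A) = △1 ⇨ △△1 := by
    simpa only [one_himp, delta_peirce] using delta_himp_eq (1 : A) 1
  have hcontract : △(1 : A) ⇨ △△1 = 1 :=
    himp_modus_ponens (HilbertAlgebra.himp_self _) (hfix ▸ HilbertAlgebra.himp_self △(1 : A))
  exact hfix.trans hcontract

theorem delta_delta (x : A) : △△x = △x := by
  simpa only [one_himp, himp_one, delta_one] using (delta_himp_eq 1 x).symm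

theorem delta_delta_himp (x y : A) : △(△x ⇨ y) = △x ⇨ △y := by
  simpa only [delta_delta, HilbertAlgebra.himp_self, himp_one, one_himp] using delta_himp_eq △x y

/-- The weak implication `x ↣ y`. -/
def weakImp (x y : A) : A := △x ⇨ y

theorem isClassicalImplication_weakImp : IsClassicalImplication (weakImp : A → A → A) where
  eq_one_of_one_imp {x} hx := by rwa [weakImp, delta_one, one_himp] at hx
  imp_imp_left x y := himp_trans (delta_himp_self x) (himp_himp_left x △y)
  imp_distrib x y z := by
    simp only [weakImp, delta_delta_himp x y]
    exact himp_trans (delta_himp_self _) (himp_distrib _ _ _)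
  peirce x y := by
    have hpremise : △(△(△x ⇨ y) ⇨ x) = △x := by
      rw [delta_delta_himp, delta_delta_himp, delta_peirce]
    exact (congrArg (· ⇨ x) hpremise).trans (delta_himp_self x)

end DeltaHilbertAlgebra

open DeltaHilbertAlgebra

theorem stmt8_general {A : Type*} [DeltaHilbertAlgebra A] :
    ⋂₀ {M : Set A | IsMaximalDeductiveSystem weakImp M} = {(1 : A)} :=
  isClassicalImplication_weakImp.sInter_isMaximalDeductiveSystem

/-- The Hilbert algebra with `△` underlying an iH₃△-algebra. It is not a global instance, which
would give `1` a second instance path. -/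
abbrev iH3D.toDeltaHilbertAlgebra (A : Type*) [iH3D A] : DeltaHilbertAlgebra A where
  himp := iH3.imp
  himp_himp_left := iH3.h1
  himp_distrib := iH3.h2
  himp_antisymm := iH3.h3 _ _
  delta := iH3D.box
  delta_himp_self := iH3D.m1
  delta_himp_eq := iH3D.m2
  delta_peirce := iH3D.m3

section WeakDeductiveSystem

attribute [local instance] iH3D.toDeltaHilbertAlgebra

variable {A : Type*} [iH3D A]

theorem isWDS_iff_isDeductiveSystem {D : Set A} : isWDS D ↔ IsDeductiveSystem weakImp D :=
  ⟨fun h => ⟨h.1, h.2 _ _⟩, fun h => ⟨h.one_mem, fun _ _ => h.modus_ponens⟩⟩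

theorem isMaxWDS_iff_isMaximalDeductiveSystem {M : Set A} :
    isMaxWDS M ↔ IsMaximalDeductiveSystem weakImp M := by
  simp only [isMaxWDS, isWDS_iff_isDeductiveSystem, IsMaximalDeductiveSystem]
  constructor
  · rintro ⟨hM, hproper, hmax⟩
    exact ⟨⟨hM, hproper⟩, fun D hD hMD => ((hmax D hD.1 hMD).resolve_right hD.2).le⟩
  · rintro ⟨⟨hM, hproper⟩, hmax⟩
    refine ⟨hM, hproper, fun D hD hMD => or_iff_not_imp_right.mpr fun hDproper => ?_⟩
    exact (hmax ⟨hD, hDproper⟩ hMD).antisymm hMD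

end WeakDeductiveSystem

/-- In an iH₃△-algebra, the intersection of all maximal weak deductive
systems equals `{1}`. -/
theorem stmt8 {A : Type*} [iH3D A] :
    ⋂₀ {M : Set A | isMaxWDS M} = {(1 : A)} := by
  let _ := iH3D.toDeltaHilbertAlgebra A
  simpa only [isMaxWDS_iff_isMaximalDeductiveSystem] using stmt8_general (A := A)
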